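/- Let α ∈ (0, 1/3) and n = 2. There exists a constant C = C(α) > 1 such that for every ellipsoid E ⊂ ℝ² (image of a ball under an invertible affine map), ∫_E (1+|x|²)^{1/(2α) − 2} dx ≤ C ∫_{(1/2)E} (1+|x|²)^{1/(2α) − 2} dx, where (1/2)E denotes the dilation of E by factor 1/2 about its center. That is, the measure (1+|x|²)^{1/(2α)−2} dx is doubling with respect to ellipsoids. -/

import Mathlib

open MeasureTheory Set

lemma K0_fin (r : ℝ) (hr : -1 < r) :
    ∫⁻ u : ℝ, (Icc (-3:ℝ) 3).indicator (fun u => ENNReal.ofReal (|u| ^ r)) u ≠ ⊤ := by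
  have h1 : IntervalIntegrable (fun x : ℝ => |x| ^ r) volume 0 3 := by
    have h := intervalIntegral.intervalIntegrable_rpow' (a := 0) (b := 3) hr
    refine h.congr ?_
    intro x hx
    rw [uIoc_of_le (by norm_num)] at hx
    simp [abs_of_pos hx.1]
  have h2 : IntervalIntegrable (fun x : ℝ => |x| ^ r) volume (-3) 0 := by
    have := (IntervalIntegrable.iff_comp_neg (f := fun x : ℝ => |x| ^ r) (a := 0) (b := 3)).1 h1
    simp only [abs_neg, neg_zero] at this
    exact this.symm
  have h3 := h2.trans h1
  rw [intervalIntegrable_iff_integrableOn_Icc_of_le (by norm_num)] at h3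
  rw [lintegral_indicator measurableSet_Icc]
  have := h3.2
  rw [hasFiniteIntegral_iff_ofReal] at this
  · exact this.ne
  · exact Filter.Eventually.of_forall fun x => by positivity

lemma oneDim_pos (p : ℝ) (hp : 0 ≤ p) (A r B : ℝ) (hA : 0 ≤ A) (hB : 0 < B) :
    ∫⁻ t in Icc (-1:ℝ) 1, ENNReal.ofReal ((A * (t - r)^2 + B) ^ p) ≤
      ENNReal.ofReal (12 * 36 ^ p) *
        ∫⁻ t in Icc (-1/3:ℝ) (1/3), ENNReal.ofReal ((A * (t - r)^2 + B) ^ p) := by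
  set m : ℝ := (A * (1/6 + |r|)^2 + B) ^ p with hm
  have hm0 : 0 ≤ m := by positivity
  have up : ∫⁻ t in Icc (-1:ℝ) 1, ENNReal.ofReal ((A * (t - r)^2 + B) ^ p) ≤
      ENNReal.ofReal (36 ^ p * m) * 2 := by
    calc _ ≤ ∫⁻ t in Icc (-1:ℝ) 1, ENNReal.ofReal (36 ^ p * m) := by
          refine setLIntegral_mono' measurableSet_Icc fun t ht => ENNReal.ofReal_le_ofReal ?_
          rw [hm, ← Real.mul_rpow (by norm_num) (by positivity)]
          refine Real.rpow_le_rpow (by positivity) ?_ hp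
          have : (t - r)^2 ≤ (6 * (1/6 + |r|))^2 := by
            refine sq_le_sq' ?_ ?_ <;> linarith [ht.1, ht.2, le_abs_self r, neg_abs_le r, abs_nonneg r]
          nlinarith
      _ = _ := by
          rw [setLIntegral_const, Real.volume_Icc]; norm_num
  have key : ∀ J : Set ℝ, MeasurableSet J → J ⊆ Icc (-1/3:ℝ) (1/3) →
      volume J = ENNReal.ofReal (1/6) → (∀ t ∈ J, (1/6 + |r|)^2 ≤ (t - r)^2) →
      ENNReal.ofReal m * ENNReal.ofReal (1/6) ≤
        ∫⁻ t in Icc (-1/3:ℝ) (1/3), ENNReal.ofReal ((A * (t - r)^2 + B) ^ p) := by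
    intro J hJ hs hv h
    calc _ = ∫⁻ t in J, ENNReal.ofReal m := by rw [setLIntegral_const, hv]
      _ ≤ ∫⁻ t in J, ENNReal.ofReal ((A * (t - r)^2 + B) ^ p) := by
          refine setLIntegral_mono' hJ fun t ht => ENNReal.ofReal_le_ofReal ?_
          refine Real.rpow_le_rpow (by positivity) ?_ hp
          have := h t ht
          nlinarith
      _ ≤ _ := lintegral_mono_set hs
  have low : ENNReal.ofReal m * ENNReal.ofReal (1/6) ≤
        ∫⁻ t in Icc (-1/3:ℝ) (1/3), ENNReal.ofReal ((A * (t - r)^2 + B) ^ p) := by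
    rcases le_total r 0 with h | h
    · refine key (Icc (1/6) (1/3)) measurableSet_Icc (Icc_subset_Icc (by norm_num) le_rfl) ?_ ?_
      · rw [Real.volume_Icc]; norm_num
      · intro t ht
        rw [abs_of_nonpos h]
        exact pow_le_pow_left₀ (by linarith) (by linarith [ht.1]) 2
    · refine key (Icc (-1/3) (-1/6)) measurableSet_Icc (Icc_subset_Icc le_rfl (by norm_num)) ?_ ?_
      · rw [Real.volume_Icc]; norm_num
      · intro t ht
        rw [abs_of_nonneg h]
        refine sq_le_sq.2 ?_
        rw [abs_of_nonneg (by linarith), abs_of_nonpos (by linarith [ht.2])]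
        linarith [ht.2]
  refine up.trans (le_trans (le_of_eq ?_) (mul_le_mul_right low _))
  rw [← ENNReal.ofReal_mul hm0, ← ENNReal.ofReal_mul (by positivity),
    show (2:ENNReal) = ENNReal.ofReal 2 by norm_num, ← ENNReal.ofReal_mul (by positivity)]
  congr 1; ring

lemma oneDim_neg (p : ℝ) (hp : p < 0) (hp' : -1/2 < p) : ∃ C : ℝ, 0 ≤ C ∧
    ∀ (A r B : ℝ) (_ : 0 ≤ A) (_ : 0 < B),
    ∫⁻ t in Icc (-1:ℝ) 1, ENNReal.ofReal ((A * (t - r)^2 + B) ^ p) ≤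
      ENNReal.ofReal C *
        ∫⁻ t in Icc (-1/3:ℝ) (1/3), ENNReal.ofReal ((A * (t - r)^2 + B) ^ p) := by
  set F : ℝ → ENNReal := (Icc (-3:ℝ) 3).indicator (fun u => ENNReal.ofReal (|u| ^ (2*p))) with hF
  have hK : ∫⁻ u : ℝ, F u ≠ ⊤ := K0_fin (2*p) (by linarith)
  have hFm : Measurable F := by
    refine Measurable.indicator ?_ measurableSet_Icc
    fun_prop
  set K : ENNReal := ∫⁻ u : ℝ, F u
  refine ⟨3/2 * (3^(-2*p) * (2 + K.toReal)), by positivity, ?_⟩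
  intro A r B hA hB
  set M : ℝ := A * (1 + |r|)^2 + B with hM
  have hM0 : 0 < M := by positivity
  have hr0 := abs_nonneg r
  have hsr : ∀ s ∈ Icc (-1:ℝ) 1, |s - r| ≤ 1 + |r| := by
    intro s hs
    rw [abs_le]
    constructor <;> linarith [hs.1, hs.2, le_abs_self r, neg_abs_le r]
  have low : ENNReal.ofReal (M ^ p) * ENNReal.ofReal (2/3) ≤
        ∫⁻ t in Icc (-1/3:ℝ) (1/3), ENNReal.ofReal ((A * (t - r)^2 + B) ^ p) := by
    calc _ = ∫⁻ t in Icc (-1/3:ℝ) (1/3), ENNReal.ofReal (M ^ p) := by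
          rw [setLIntegral_const, Real.volume_Icc]; norm_num
      _ ≤ _ := by
          refine setLIntegral_mono' measurableSet_Icc fun t ht => ENNReal.ofReal_le_ofReal ?_
          refine Real.rpow_le_rpow_of_nonpos (by positivity) ?_ hp.le
          have h1 := hsr t ⟨by linarith [ht.1], by linarith [ht.2]⟩
          have : (t - r)^2 ≤ (1 + |r|)^2 := by
            rw [← sq_abs (t - r)]
            exact pow_le_pow_left₀ (abs_nonneg _) h1 2
          nlinarith
  have pt : ∀ s ∈ Icc (-1:ℝ) 1, s ≠ r → ENNReal.ofReal ((A * (s - r)^2 + B) ^ p) ≤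
      ENNReal.ofReal (M ^ p * 3^(-2*p)) * (1 + F (s - r)) := by
    intro s hs hne
    have habs : 0 < |s - r| := abs_pos.2 (sub_ne_zero.2 hne)
    set u : ℝ := |s - r| / (1 + |r|) with hu
    have hu0 : 0 < u := by positivity
    have hu1 : u ≤ 1 := (div_le_one (by positivity)).2 (hsr s hs)
    have hq : (A * (s - r)^2 + B) ^ p ≤ M ^ p * u ^ (2*p) := by
      have : M ^ p * u ^ (2*p) = (u^2 * M) ^ p := by
        rw [Real.mul_rpow (by positivity) hM0.le, Real.rpow_mul hu0.le, mul_comm]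
        norm_num
      rw [this]
      refine Real.rpow_le_rpow_of_nonpos (by positivity) ?_ hp.le
      have e : (s - r)^2 = u^2 * (1+|r|)^2 := by
        rw [← sq_abs (s - r), hu, div_pow]; field_simp
      rw [e, hM]
      have : u^2 ≤ 1 := by nlinarith
      nlinarith
    have h3 : (3:ℝ)^(-2*p) = (1/3)^(2*p) := by
      rw [one_div, Real.inv_rpow (by norm_num), ← Real.rpow_neg (by norm_num)]
      congr 1; ring
    rw [ENNReal.ofReal_mul (by positivity), mul_assoc]
    refine (ENNReal.ofReal_le_ofReal hq).trans ?_
    rw [ENNReal.ofReal_mul (by positivity)]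
    refine mul_le_mul_right ?_ _
    rcases le_or_gt 2 |r| with h | h
    · calc ENNReal.ofReal (u ^ (2*p)) ≤ ENNReal.ofReal (3 ^ (-2*p)) * 1 := by
            rw [mul_one, h3]
            refine ENNReal.ofReal_le_ofReal ?_
            refine Real.rpow_le_rpow_of_nonpos (by positivity) ?_ (by linarith)
            rw [hu, le_div_iff₀ (by positivity)]
            have : |r| - |s| ≤ |s - r| := by rw [abs_sub_comm]; exact abs_sub_abs_le_abs_sub r s
            have : |s| ≤ 1 := abs_le.2 hs
            linarith
        _ ≤ _ := mul_le_mul_right le_self_add _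
    · calc ENNReal.ofReal (u ^ (2*p)) ≤ ENNReal.ofReal (3 ^ (-2*p)) * F (s - r) := by
            have hmem : s - r ∈ Icc (-3:ℝ) 3 := abs_le.1 ((hsr s hs).trans (by linarith))
            rw [hF, indicator_of_mem hmem, ← ENNReal.ofReal_mul (by positivity), h3,
              ← Real.mul_rpow (by norm_num) (by positivity)]
            refine ENNReal.ofReal_le_ofReal ?_
            refine Real.rpow_le_rpow_of_nonpos (by positivity) ?_ (by linarith)
            rw [hu, le_div_iff₀ (by positivity)]
            nlinarith
        _ ≤ _ := mul_le_mul_right le_add_self _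
  have up : ∫⁻ t in Icc (-1:ℝ) 1, ENNReal.ofReal ((A * (t - r)^2 + B) ^ p) ≤
      ENNReal.ofReal (M ^ p * 3^(-2*p)) * (2 + K) := by
    calc _ ≤ ∫⁻ s in Icc (-1:ℝ) 1, ENNReal.ofReal (M ^ p * 3^(-2*p)) * (1 + F (s - r)) := by
          refine lintegral_mono_ae ?_
          have hae : ∀ᵐ s : ℝ ∂(volume.restrict (Icc (-1:ℝ) 1)), s ≠ r :=
            ae_restrict_of_ae (Measure.ae_ne volume r)
          filter_upwards [ae_restrict_mem measurableSet_Icc, hae] with s hs hne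
          exact pt s hs hne
      _ = ENNReal.ofReal (M ^ p * 3^(-2*p)) * ∫⁻ s in Icc (-1:ℝ) 1, (1 + F (s - r)) := by
          rw [lintegral_const_mul]
          fun_prop
      _ ≤ _ := by
          refine mul_le_mul_right ?_ _
          rw [lintegral_add_left measurable_const]
          refine add_le_add (le_of_eq ?_) ?_
          · rw [setLIntegral_const, Real.volume_Icc]; norm_num
          · exact (setLIntegral_le_lintegral _ _).trans (le_of_eq (lintegral_sub_right_eq_self F r))
  refine up.trans (le_trans (le_of_eq ?_) (mul_le_mul_right low _))
  have hKK : (2 + K) = ENNReal.ofReal (2 + K.toReal) := by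
    rw [ENNReal.ofReal_add (by norm_num) (by positivity), ENNReal.ofReal_toReal hK]; norm_num
  rw [hKK, ← ENNReal.ofReal_mul (by positivity), ← ENNReal.ofReal_mul (by positivity),
    ← ENNReal.ofReal_mul (by positivity)]
  congr 1; ring

lemma one_dim (p : ℝ) (hp' : -1/2 < p) : ∃ C : ℝ, 0 ≤ C ∧
    ∀ (a b : EuclideanSpace ℝ (Fin 2)),
    ∫⁻ t in Icc (-1:ℝ) 1, ENNReal.ofReal ((1 + ‖a + t • b‖^2) ^ p) ≤
      ENNReal.ofReal C *
        ∫⁻ t in Icc (-1/3:ℝ) (1/3), ENNReal.ofReal ((1 + ‖a + t • b‖^2) ^ p) := by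
  have : ∃ C : ℝ, 0 ≤ C ∧
    ∀ (A r B : ℝ) (_ : 0 ≤ A) (_ : 0 < B),
    ∫⁻ t in Icc (-1:ℝ) 1, ENNReal.ofReal ((A * (t - r)^2 + B) ^ p) ≤
      ENNReal.ofReal C *
        ∫⁻ t in Icc (-1/3:ℝ) (1/3), ENNReal.ofReal ((A * (t - r)^2 + B) ^ p) := by
    rcases lt_or_ge p 0 with h | h
    · exact oneDim_neg p h hp'
    · exact ⟨12 * 36 ^ p, by positivity, fun A r B hA hB => oneDim_pos p h A r B hA hB⟩
  obtain ⟨C, hC, H⟩ := this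
  refine ⟨C, hC, fun a b => ?_⟩
  obtain ⟨A, r, B, hA, hB, e⟩ : ∃ A r B : ℝ, 0 ≤ A ∧ 0 < B ∧
      ∀ t : ℝ, 1 + ‖a + t • b‖^2 = A * (t - r)^2 + B := by
    by_cases hb : b = 0
    · exact ⟨0, 0, 1 + ‖a‖^2, le_rfl, by positivity, fun t => by simp [hb]⟩
    · have hb' : 0 < ‖b‖ := norm_pos_iff.2 hb
      refine ⟨‖b‖^2, - inner ℝ a b / ‖b‖^2, 1 + ‖a + (- inner ℝ a b / ‖b‖^2) • b‖^2,
        by positivity, by positivity, fun t => ?_⟩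
      rw [norm_add_sq_real, norm_add_sq_real, inner_smul_right, inner_smul_right, norm_smul,
        norm_smul, mul_pow, mul_pow, Real.norm_eq_abs, Real.norm_eq_abs, sq_abs, sq_abs]
      field_simp
      ring
  simp_rw [e]
  exact H A r B hA hB

lemma two_dim (p : ℝ) (hp' : -1/2 < p) : ∃ C : ℝ, 0 ≤ C ∧
    ∀ (a b c : EuclideanSpace ℝ (Fin 2)),
    ∫⁻ z in Icc (-1:ℝ) 1 ×ˢ Icc (-1:ℝ) 1,
        ENNReal.ofReal ((1 + ‖a + (z.1 • b + z.2 • c)‖^2) ^ p) ≤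
      ENNReal.ofReal C *
        ∫⁻ z in Icc (-1/3:ℝ) (1/3) ×ˢ Icc (-1/3:ℝ) (1/3),
          ENNReal.ofReal ((1 + ‖a + (z.1 • b + z.2 • c)‖^2) ^ p) := by
  obtain ⟨C, hC, H⟩ := one_dim p hp'
  refine ⟨C * C, by positivity, fun a b c => ?_⟩
  have hm : Measurable fun z : ℝ × ℝ =>
      ENNReal.ofReal ((1 + ‖a + (z.1 • b + z.2 • c)‖^2) ^ p) := by fun_prop
  rw [Measure.volume_eq_prod, ← Measure.prod_restrict, ← Measure.prod_restrict,
    lintegral_prod _ hm.aemeasurable, lintegral_prod _ hm.aemeasurable]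
  have hm2 : Measurable fun x : ℝ => ∫⁻ y in Icc (-1/3:ℝ) (1/3),
      ENNReal.ofReal ((1 + ‖a + (x • b + y • c)‖^2) ^ p) := hm.lintegral_prod_right'
  calc _ ≤ ∫⁻ x in Icc (-1:ℝ) 1, ENNReal.ofReal C * ∫⁻ y in Icc (-1/3:ℝ) (1/3),
            ENNReal.ofReal ((1 + ‖a + (x • b + y • c)‖^2) ^ p) := by
        refine lintegral_mono fun x => ?_
        simpa only [add_assoc] using H (a + x • b) c
    _ = ENNReal.ofReal C * ∫⁻ y in Icc (-1/3:ℝ) (1/3), ∫⁻ x in Icc (-1:ℝ) 1,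
            ENNReal.ofReal ((1 + ‖a + (x • b + y • c)‖^2) ^ p) := by
        rw [lintegral_const_mul _ hm2, lintegral_lintegral_swap]
        exact hm.aemeasurable
    _ ≤ ENNReal.ofReal C * ∫⁻ y in Icc (-1/3:ℝ) (1/3), ENNReal.ofReal C *
          ∫⁻ x in Icc (-1/3:ℝ) (1/3),
            ENNReal.ofReal ((1 + ‖a + (x • b + y • c)‖^2) ^ p) := by
        refine mul_le_mul_right (lintegral_mono fun y => ?_) _
        simpa only [add_assoc, add_comm (y • c)] using H (a + y • c) b
    _ = _ := by
        rw [lintegral_const_mul _ hm.lintegral_prod_left', ← mul_assoc, ← ENNReal.ofReal_mul hC,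
          lintegral_lintegral_swap]
        exact (hm.comp measurable_swap).aemeasurable

lemma euclid (f : EuclideanSpace ℝ (Fin 2) → ENNReal) (s : Set (EuclideanSpace ℝ (Fin 2))) :
    ∫⁻ v in s, f v = ∫⁻ z in (fun z : ℝ × ℝ => !₂[z.1, z.2]) ⁻¹' s, f !₂[z.1, z.2] := by
  let e : ℝ × ℝ ≃ᵐ EuclideanSpace ℝ (Fin 2) :=
    (MeasurableEquiv.finTwoArrow (α := ℝ)).symm.trans (MeasurableEquiv.toLp 2 (Fin 2 → ℝ))
  have he : MeasurePreserving e volume volume :=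
    (PiLp.volume_preserving_toLp (Fin 2)).comp (volume_preserving_finTwoArrow ℝ).symm
  exact (he.setLIntegral_comp_preimage_emb e.measurableEmbedding f s).symm

theorem stmt8 (α : ℝ) (hα : α ∈ Set.Ioo (0:ℝ) (1/3)) :
    ∃ C : ℝ, 1 < C ∧
      ∀ (x₀ : EuclideanSpace ℝ (Fin 2))
        (T : EuclideanSpace ℝ (Fin 2) ≃L[ℝ] EuclideanSpace ℝ (Fin 2)),
        (∫⁻ x in (fun v => x₀ + T v) '' Metric.ball 0 1,
            ENNReal.ofReal ((1 + ‖x‖ ^ 2) ^ (1 / (2 * α) - 2))) ≤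
          ENNReal.ofReal C *
            ∫⁻ x in (fun v => x₀ + (1/2 : ℝ) • T v) '' Metric.ball 0 1,
              ENNReal.ofReal ((1 + ‖x‖ ^ 2) ^ (1 / (2 * α) - 2)) := by
  obtain ⟨h0, h1⟩ := hα
  have hp : -1/2 < 1 / (2 * α) - 2 := by
    have : 3/2 < 1 / (2*α) := by
      rw [lt_div_iff₀ (by positivity)]; linarith
    linarith
  generalize 1 / (2 * α) - 2 = p at hp
  obtain ⟨C, hC, H⟩ := two_dim p hp
  refine ⟨C + 2, by linarith, fun x₀ T => ?_⟩
  have himg : (fun v => x₀ + (1/2 : ℝ) • T v) '' Metric.ball 0 1 =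
      (fun v => x₀ + T v) '' Metric.ball 0 (1/2) := by
    ext x
    constructor
    · rintro ⟨v, hv, rfl⟩
      refine ⟨(1/2:ℝ) • v, ?_, by simp⟩
      rw [mem_ball_zero_iff] at hv ⊢
      rw [norm_smul]; norm_num; linarith
    · rintro ⟨v, hv, rfl⟩
      refine ⟨(2:ℝ) • v, ?_, by simp [smul_smul]⟩
      rw [mem_ball_zero_iff] at hv ⊢
      rw [norm_smul]; norm_num; linarith
  have cov : ∀ ρ : ℝ, ∫⁻ x in (fun v => x₀ + T v) '' Metric.ball 0 ρ,
        ENNReal.ofReal ((1 + ‖x‖ ^ 2) ^ p) =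
      ENNReal.ofReal |(T : EuclideanSpace ℝ (Fin 2) →L[ℝ] EuclideanSpace ℝ (Fin 2)).det| *
        ∫⁻ v in Metric.ball 0 ρ, ENNReal.ofReal ((1 + ‖x₀ + T v‖ ^ 2) ^ p) := by
    intro ρ
    rw [lintegral_image_eq_lintegral_abs_det_fderiv_mul volume measurableSet_ball
      (f' := fun _ => (T : EuclideanSpace ℝ (Fin 2) →L[ℝ] EuclideanSpace ℝ (Fin 2)))]
    · rw [lintegral_const_mul]
      fun_prop
    · intro x _
      exact (T.hasFDerivAt.const_add x₀).hasFDerivWithinAt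
    · intro x _ y _ h
      simpa using h
  rw [himg, cov, cov, mul_left_comm]
  refine mul_le_mul_right ?_ _
  rw [euclid, euclid]
  have hT : ∀ z : ℝ × ℝ, T !₂[z.1, z.2] = z.1 • T !₂[1, 0] + z.2 • T !₂[0, 1] := by
    intro z
    rw [← map_smul, ← map_smul, ← map_add]
    congr 1
    ext i
    fin_cases i <;> simp
  simp_rw [hT]
  refine (lintegral_mono_set ?_).trans ((H x₀ (T !₂[1, 0]) (T !₂[0, 1])).trans
    (mul_le_mul' (ENNReal.ofReal_le_ofReal (by linarith)) (lintegral_mono_set ?_)))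
  · intro z hz
    rw [mem_preimage, mem_ball_zero_iff, EuclideanSpace.norm_eq, Real.sqrt_lt' (by norm_num)] at hz
    simp [Fin.sum_univ_two] at hz
    refine ⟨abs_le.1 (abs_le_of_sq_le_sq ?_ (by norm_num)),
      abs_le.1 (abs_le_of_sq_le_sq ?_ (by norm_num))⟩ <;> nlinarith [sq_nonneg z.1, sq_nonneg z.2]
  · rintro z ⟨⟨h1, h2⟩, ⟨h3, h4⟩⟩
    rw [mem_preimage, mem_ball_zero_iff, EuclideanSpace.norm_eq, Real.sqrt_lt' (by norm_num)]
    simp [Fin.sum_univ_two]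
    nlinarith
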